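/- arXiv:1512.07757 — 4 statements merged into one kernel-verified Lean document; each statement's English description precedes it below -/
import Mathlib

section
/- Let G be a d-dimensional simplicial complex on vertex set Fin n with incidence matrix ∂, and let (F,R) be a rooted forest of G. Then the absolute value of det(∂_{R̄,F}) equals the cardinality of the relative homology group H_{d-1}(F,R), i.e. |det(∂_{R̄,F})| = Nat.card of the quotient of ℤ^{G_{d-1}} by the subgroup generated by the standard basis vectors e_r for r ∈ R together with the columns of ∂ indexed by the elements of F. -/
open Finset

/-- `G` is a `d`-dimensional simplicial complex on vertex set `Fin n`. -/
def IsComplex (n d : ℕ) (G : Finset (Finset (Fin n))) : Prop :=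
  (∀ f ∈ G, ∀ g ⊆ f, g ∈ G) ∧ (∀ f ∈ G, f.card ≤ d + 1) ∧ ∃ f ∈ G, f.card = d + 1

/-- The `k`-dimensional faces of `G` (faces of cardinality `k+1`). -/
def faces {n : ℕ} (G : Finset (Finset (Fin n))) (k : ℕ) : Finset (Finset (Fin n)) :=
  G.filter fun f => f.card = k + 1

/-- Incidence entry `∂[r,f]`: equals `(-1)^j` if `r` is obtained from `f` by deleting
its `j`-th smallest element (indexing from 0), and `0` if `r ⊄ f`. -/
def incEntry {n : ℕ} (r f : Finset (Fin n)) : ℤ :=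
  if r ⊆ f then
    (-1 : ℤ) ^ ((f \ r).sum fun v => (f.filter fun w => w < v).card)
  else 0

/-- `F` is a forest of the `d`-dimensional complex `G`: the columns of the incidence
matrix indexed by `F` are linearly independent over `ℚ`. -/
def IsForest (n d : ℕ) (G F : Finset (Finset (Fin n))) : Prop :=
  F ⊆ faces G d ∧
    LinearIndependent ℚ fun f : F => fun r : faces G (d - 1) => (incEntry r.1 f.1 : ℚ)

/-- `R` is a root of `F`: the rows indexed by `R̄ = G_{d-1} \ R` of the submatrix of the
incidence matrix with column set `F` are linearly independent and span the row space of
that submatrix. -/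
def IsRoot (n d : ℕ) (G F R : Finset (Finset (Fin n))) : Prop :=
  R ⊆ faces G (d - 1) ∧
    LinearIndependent ℚ
      (fun r : (faces G (d - 1) \ R : Finset (Finset (Fin n))) =>
        fun f : F => (incEntry r.1 f.1 : ℚ)) ∧
    Submodule.span ℚ
        (Set.range fun r : (faces G (d - 1) \ R : Finset (Finset (Fin n))) =>
          fun f : F => (incEntry r.1 f.1 : ℚ)) =
      Submodule.span ℚ
        (Set.range fun r : (faces G (d - 1) : Finset (Finset (Fin n))) =>
          fun f : F => (incEntry r.1 f.1 : ℚ))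

/-- `(F,R)` is a rooted forest of the `d`-dimensional complex `G`. -/
def IsRootedForest (n d : ℕ) (G F R : Finset (Finset (Fin n))) : Prop :=
  IsForest n d G F ∧ IsRoot n d G F R


/-- The subgroup of `ℤ^{G_{d-1}}` generated by the standard basis vectors `e_r` for
`r ∈ R` together with the columns of the incidence matrix indexed by the elements
of `F`. -/
def relSubgroup (n d : ℕ) (G F R : Finset (Finset (Fin n))) :
    AddSubgroup ((faces G (d - 1) : Finset (Finset (Fin n))) → ℤ) :=
  AddSubgroup.closure
    ({v | ∃ r : (faces G (d - 1) : Finset (Finset (Fin n))), r.1 ∈ R ∧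
        v = Pi.single r 1} ∪
      {v | ∃ f : (faces G d : Finset (Finset (Fin n))), f.1 ∈ F ∧
        v = fun r => incEntry r.1 f.1})

/-!
Restriction to the coordinates in `R̄` maps `ℤ^{G_{d-1}}` onto `ℤ^{R̄}` with kernel spanned by the
`e_r`, `r ∈ R`, and takes the column span of `∂_F` onto that of `∂_{R̄,F}`. Hence `H_{d-1}(F,R)`
is isomorphic to the cokernel of the square matrix `∂_{R̄,F}`, and the cokernel of a nonsingular
integer matrix has order the absolute value of its determinant.
-/

theorem natAbs_det_eq_card_quotient_range {M : Type*} [AddCommGroup M] [Module.Free ℤ M]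
    [Module.Finite ℤ M] {f : M →ₗ[ℤ] M} (hf : Function.Injective f) :
    (LinearMap.det f).natAbs = Nat.card (M ⧸ LinearMap.range f) :=
  Submodule.natAbs_det_equiv (LinearMap.range f) (LinearEquiv.ofInjective f hf)

theorem natAbs_det_eq_card_quotient_range_mulVecLin {ι : Type*} [Fintype ι] [DecidableEq ι]
    {A : Matrix ι ι ℤ} (hA : A.det ≠ 0) :
    A.det.natAbs = Nat.card ((ι → ℤ) ⧸ LinearMap.range A.mulVecLin) := by
  rw [← natAbs_det_eq_card_quotient_range (Matrix.mulVec_injective_of_det_ne_zero hA),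
    ← Matrix.toLin'_apply', LinearMap.det_toLin']

theorem card_quotient_comap_of_surjective {S M N : Type*} [Ring S] [AddCommGroup M]
    [AddCommGroup N] [Module S M] [Module S N] {f : M →ₗ[S] N} (hf : Function.Surjective f)
    (p : Submodule S N) : Nat.card (M ⧸ p.comap f) = Nat.card (N ⧸ p) :=
  p.toAddSubgroup.index_comap_of_surjective (f := f.toAddMonoidHom) hf

theorem ker_funLeft_eq_span_single {S ι μ : Type*} [Semiring S] [Finite μ] [DecidableEq μ]
    (ρ : ι → μ) :
    LinearMap.ker (LinearMap.funLeft S S ρ) =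
      Submodule.span S ((fun i => Pi.single i 1) '' (Set.range ρ)ᶜ) := by
  have ker_eq : LinearMap.ker (LinearMap.funLeft S S ρ) =
      ⨅ i ∈ Set.range ρ, LinearMap.ker (LinearMap.proj i : (μ → S) →ₗ[S] S) := by
    ext v
    simp [funext_iff, LinearMap.funLeft_apply]
  rw [ker_eq, ← LinearMap.iSup_range_single_eq_iInf_ker_proj S (fun _ => S)
    isCompl_compl.symm (Set.toFinite _), Set.image_eq_iUnion]
  simp only [Submodule.span_iUnion, LinearMap.range_eq_map, ← Ideal.span_singleton_one,
    Ideal.span, Submodule.map_span, Set.image_singleton, LinearMap.coe_single]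

theorem comap_funLeft_range_mulVecLin_submatrix {S ι κ μ : Type*} [CommRing S] [Fintype ι]
    [Finite μ] [DecidableEq μ] (A : Matrix μ κ S) (ρ : ι → μ) (e : ι ≃ κ) :
    (LinearMap.range (A.submatrix ρ e).mulVecLin).comap (LinearMap.funLeft S S ρ) =
      Submodule.span S ((fun i => Pi.single i 1) '' (Set.range ρ)ᶜ ∪ Set.range A.col) := by
  have := Fintype.ofEquiv ι e
  have range_eq : LinearMap.range (A.submatrix ρ e).mulVecLin =
      (LinearMap.range A.mulVecLin).map (LinearMap.funLeft S S ρ) := by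
    rw [Matrix.mulVecLin_submatrix, LinearMap.range_comp, LinearMap.range_comp_of_range_eq_top]
    exact LinearMap.range_eq_top.2
      (LinearMap.funLeft_surjective_of_injective S S _ e.symm.injective)
  rw [range_eq, Submodule.comap_map_eq, ker_funLeft_eq_span_single, Matrix.range_mulVecLin,
    sup_comm, Submodule.span_union]

/-- For `A = ∂_F` and `ρ` the inclusion of `R̄`, the quotient on the right is `H_{d-1}(F,R)`. -/
theorem natAbs_det_eq_card_relative_homology_general {ι κ μ : Type*} [Fintype ι] [DecidableEq ι]
    [Finite μ] [DecidableEq μ] (A : Matrix μ κ ℤ) {ρ : ι → μ} (hρ : Function.Injective ρ)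
    (e : ι ≃ κ) (hdet : (A.submatrix ρ e).det ≠ 0) :
    (A.submatrix ρ e).det.natAbs =
      Nat.card ((μ → ℤ) ⧸
        Submodule.span ℤ ((fun i => Pi.single i 1) '' (Set.range ρ)ᶜ ∪ Set.range A.col)) := by
  rw [natAbs_det_eq_card_quotient_range_mulVecLin hdet, ← comap_funLeft_range_mulVecLin_submatrix,
    card_quotient_comap_of_surjective (LinearMap.funLeft_surjective_of_injective ℤ ℤ ρ hρ)]

theorem det_ne_zero_of_linearIndependent_row_map {S T ι : Type*} [CommRing S] [CommRing T]
    [Nontrivial T] [Fintype ι] [DecidableEq ι] (φ : S →+* T) {A : Matrix ι ι S}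
    (hA : LinearIndependent T (A.map φ).row) : A.det ≠ 0 := by
  have map_det_ne_zero : φ A.det ≠ 0 := by
    rw [φ.map_det]
    exact nonZeroDivisors.ne_zero <| Matrix.nonsingular_iff_det_mem_nonZeroDivisors.1 <|
      Matrix.Nonsingular.of_linearIndependent_row hA
  exact fun h => map_det_ne_zero (h ▸ map_zero φ)

/-- The incidence matrix of two families of faces: for `X = faces G (d - 1)` it is the submatrix
`∂_F` of the incidence matrix of `G` with column set `F`. -/
def incMatrix {n : ℕ} (X F : Finset (Finset (Fin n))) : Matrix X F ℤ :=
  Matrix.of fun r f => incEntry r.1 f.1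

/-- The inclusion of `R̄ = X \ R` into `X`, selecting the rows of `∂_{R̄,F}`. -/
def sdiffInclusion {α : Type*} [DecidableEq α] (X R : Finset α) : (X \ R : Finset α) → X :=
  Subtype.map id fun _ hx => Finset.sdiff_subset hx

theorem sdiffInclusion_injective {α : Type*} [DecidableEq α] (X R : Finset α) :
    Function.Injective (sdiffInclusion X R) :=
  Subtype.map_injective _ Function.injective_id

theorem compl_range_sdiffInclusion {α : Type*} [DecidableEq α] (X R : Finset α) :
    (Set.range (sdiffInclusion X R))ᶜ = {x | x.1 ∈ R} := by
  ext x
  simp [sdiffInclusion, Subtype.ext_iff]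

theorem relSubgroup_eq_span {n d : ℕ} {G F : Finset (Finset (Fin n))} (hF : F ⊆ faces G d)
    (R : Finset (Finset (Fin n))) :
    relSubgroup n d G F R =
      (Submodule.span ℤ
        ((fun r => Pi.single r 1) '' (Set.range (sdiffInclusion (faces G (d - 1)) R))ᶜ ∪
          Set.range (incMatrix (faces G (d - 1)) F).col)).toAddSubgroup := by
  rw [Submodule.span_int_eq_addSubgroupClosure, compl_range_sdiffInclusion, relSubgroup]
  congr 2
  · ext v
    simp [eq_comm]
  · ext v
    constructor
    · rintro ⟨f, hf, rfl⟩
      exact ⟨⟨f, hf⟩, rfl⟩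
    · rintro ⟨f, rfl⟩
      exact ⟨⟨f, hF f.2⟩, f.2, rfl⟩

theorem IsRoot.det_submatrix_ne_zero {n d : ℕ} {G F R : Finset (Finset (Fin n))}
    (hR : IsRoot n d G F R) (e : (faces G (d - 1) \ R : Finset (Finset (Fin n))) ≃ F) :
    ((incMatrix (faces G (d - 1)) F).submatrix (sdiffInclusion _ R) e).det ≠ 0 :=
  det_ne_zero_of_linearIndependent_row_map (Int.castRingHom ℚ) <|
    hR.2.1.map' (LinearEquiv.funCongrLeft ℚ ℚ e).toLinearMap (LinearEquiv.ker _)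

/-- If `(F,R)` is a rooted forest of `G`, then
`|det(∂_{R̄,F})| = |H_{d-1}(F,R)|`, the cardinality of the quotient of `ℤ^{G_{d-1}}`
by the subgroup generated by the `e_r`, `r ∈ R`, and the columns of `∂` indexed by `F`
(the determinant being computed with respect to any identification of `R̄` with `F`). -/
theorem natAbs_det_eq_card_relative_homology
    (n d : ℕ) (hn : 1 ≤ n) (hd : 1 ≤ d)
    (G : Finset (Finset (Fin n))) (hG : IsComplex n d G)
    (F R : Finset (Finset (Fin n))) (hFR : IsRootedForest n d G F R) :
    ∀ e : (faces G (d - 1) \ R : Finset (Finset (Fin n))) ≃ F,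
      (Matrix.det (Matrix.of fun r r' => incEntry r.1 (e r').1)).natAbs =
        Nat.card (((faces G (d - 1) : Finset (Finset (Fin n))) → ℤ) ⧸
          relSubgroup n d G F R) := by
  intro e
  rw [relSubgroup_eq_span hFR.1.1]
  exact natAbs_det_eq_card_relative_homology_general _ (sdiffInclusion_injective _ R) e
    (hFR.2.det_submatrix_ne_zero e)
end

section
/- Let G be a d-dimensional simplicial complex on vertex set Fin n with incidence matrix ∂, let (F,R) be a rooted forest of G, let m = |R̄| = |F|, and fix bijective enumerations α : Fin m → R̄ and β : Fin m → F. Then Σ over all fitting orientations φ of (F,R) of Λ_{α,β}(φ) equals the absolute value of det(∂_{R̄,F}) (equivalently, the cardinality of the relative homology group H_{d-1}(F,R)). -/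
open Finset

/-! With rows and columns labelled by `α` and `β`, a bijection from rows to columns is a
permutation, so the signed sum over all bijections is the Leibniz expansion of the determinant. The
bijections that are not fitting meet a zero entry and contribute nothing. -/

theorem incEntry_ne_zero_iff {n : ℕ} {r f : Finset (Fin n)} : incEntry r f ≠ 0 ↔ r ⊆ f := by
  simp [incEntry]

section Matrix

variable {m ι κ R : Type*} [Fintype m] [DecidableEq m] [Fintype ι] [DecidableEq ι]
  [Fintype κ] [DecidableEq κ]

theorem sum_equiv_sign_mul_prod_eq_det_submatrix [CommRing R] (M : Matrix ι κ R)
    (α : m ≃ ι) (β : m ≃ κ) :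
    ∑ φ : ι ≃ κ, (Equiv.Perm.sign ((α.trans φ).trans β.symm) : R) * ∏ r, M r (φ r) =
      (M.submatrix α β).det := by
  rw [← Matrix.det_transpose, Matrix.det_apply']
  refine Fintype.sum_equiv (α.symm.equivCongr β.symm) _ _ fun φ => ?_
  have prod_reindex : ∏ i, M (α i) (φ (α i)) = ∏ r, M r (φ r) :=
    α.prod_comp fun r => M r (φ r)
  simp [← prod_reindex, Equiv.equivCongr]

theorem sum_equiv_ne_zero_sign_mul_prod_eq_det_submatrix [CommRing R] [DecidableEq R]
    (M : Matrix ι κ R) (α : m ≃ ι) (β : m ≃ κ) :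
    ∑ φ : ι ≃ κ with ∀ r, M r (φ r) ≠ 0,
        (Equiv.Perm.sign ((α.trans φ).trans β.symm) : R) * ∏ r, M r (φ r) =
      (M.submatrix α β).det := by
  rw [← sum_equiv_sign_mul_prod_eq_det_submatrix]
  refine Finset.sum_filter_of_ne fun φ _ summand_ne_zero r entry_eq_zero => summand_ne_zero ?_
  rw [Finset.prod_eq_zero (Finset.mem_univ r) entry_eq_zero, mul_zero]

theorem sum_sign_fittingOrientations_eq_natAbs_det_general
    [CommRing R] [LinearOrder R] [IsStrictOrderedRing R]
    (M : Matrix ι κ R) (α : m ≃ ι) (β : m ≃ κ) :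
    ∑ φ : ι ≃ κ with ∀ r, M r (φ r) ≠ 0,
        (SignType.sign (M.submatrix α β).det : R) *
          ((Equiv.Perm.sign ((α.trans φ).trans β.symm) : R) * ∏ r, M r (φ r)) =
      |(M.submatrix α β).det| := by
  rw [← Finset.mul_sum, sum_equiv_ne_zero_sign_mul_prod_eq_det_submatrix, sign_mul_self]

end Matrix

open scoped Classical in
/-- For a rooted forest `(F,R)` with fixed bijective enumerations
`α : Fin m ≃ R̄` and `β : Fin m ≃ F` (where `m = |R̄| = |F|`), the sum of
`Λ_{α,β}(φ) = sign(α,β) · sign(π_{α,β,φ}) · Π_{r∈R̄} ∂[r,φ(r)]` over all fitting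
orientations `φ` of `(F,R)` equals `|det(∂_{R̄,F})|`. -/
theorem sum_sign_fittingOrientations_eq_natAbs_det
    (n d : ℕ) (hn : 1 ≤ n) (hd : 1 ≤ d)
    (G : Finset (Finset (Fin n))) (hG : IsComplex n d G)
    (F R : Finset (Finset (Fin n))) (hFR : IsRootedForest n d G F R)
    (α : Fin ((faces G (d - 1) \ R).card) ≃
      (faces G (d - 1) \ R : Finset (Finset (Fin n))))
    (β : Fin ((faces G (d - 1) \ R).card) ≃ F) :
    (∑ φ ∈ Finset.univ.filter
        (fun φ : (faces G (d - 1) \ R : Finset (Finset (Fin n))) ≃ F =>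
          ∀ r, r.1 ⊆ (φ r).1),
        Int.sign (Matrix.det (Matrix.of fun i j => incEntry (α i).1 (β j).1)) *
          ((Equiv.Perm.sign ((α.trans φ).trans β.symm) : ℤ) *
            ∏ r : (faces G (d - 1) \ R : Finset (Finset (Fin n))),
              incEntry r.1 (φ r).1)) =
      ((Matrix.det (Matrix.of fun i j => incEntry (α i).1 (β j).1)).natAbs : ℤ) := by
  simpa [← Int.sign_eq_sign, incEntry_ne_zero_iff, Matrix.submatrix] using
    sum_sign_fittingOrientations_eq_natAbs_det_general
      (Matrix.of fun (r : (faces G (d - 1) \ R : Finset (Finset (Fin n)))) (f : F) =>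
        incEntry r.1 f.1) α β
end

section
/- Let G be a d-dimensional simplicial complex on vertex set Fin n with incidence matrix ∂, let (F,R) be a rooted forest of G with m = |R̄| = |F|, fix bijective enumerations α : Fin m → R̄ and β : Fin m → F, and let φ, φ' be two fitting orientations of (F,R). Then sign(π_{α,β,φ}) · sign(π_{α,β,φ'}) · Π_{r ∈ R̄} ∂[r,φ(r)] · ∂[r,φ'(r)] = (−1)^{s}, where s is the number of oriented strips of (φ,φ'). -/
/-!
Since `π_φ = β⁻¹ ∘ φ ∘ α`, the permutation `π_φ⁻¹ ∘ π_φ'` is the conjugate by `α` of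
`θ = φ⁻¹ ∘ φ'`, so the two signs multiply to the sign of `θ`. A fixed point of `θ` contributes the
square of an incidence entry, which is `1`. Hence everything factors over the nontrivial cycles `C`
of `θ`, each contributing `-(-1)^|C|` times the weight of `C`; as the weight is `±1`, this is `-1`
exactly when the weight is `(-1)^|C|`.
-/

open Finset

section CycleWeights

variable {X : Type*} [Fintype X] [DecidableEq X]

theorem prod_support_eq_prod_cycleFactorsFinset {M : Type*} [CommMonoid M]
    (σ : Equiv.Perm X) (w : X → M) :
    ∏ x ∈ σ.support, w x = ∏ c ∈ σ.cycleFactorsFinset, ∏ x ∈ c.support, w x := by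
  have support_eq : σ.support = σ.cycleFactorsFinset.biUnion Equiv.Perm.support := by
    ext x
    rw [Equiv.Perm.mem_support_iff_mem_support_of_mem_cycleFactorsFinset, mem_biUnion]
  rw [support_eq, prod_biUnion]
  exact fun c hc c' hc' hne =>
    (σ.cycleFactorsFinset_pairwise_disjoint hc hc' hne).disjoint_support

theorem sign_eq_prod_sign_cycleFactorsFinset (σ : Equiv.Perm X) :
    Equiv.Perm.sign σ = ∏ c ∈ σ.cycleFactorsFinset, Equiv.Perm.sign c := by
  conv_lhs => rw [← σ.cycleFactorsFinset_noncommProd]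
  rw [map_noncommProd, noncommProd_eq_prod]
  rfl

theorem sign_mul_prod_support_of_isCycle {c : Equiv.Perm X} (hc : c.IsCycle) {w : X → ℤ}
    (hw : ∀ x ∈ c.support, IsUnit (w x)) :
    (Equiv.Perm.sign c : ℤ) * ∏ x ∈ c.support, w x =
      if ∏ x ∈ c.support, w x = (-1) ^ #c.support then -1 else 1 := by
  have weight_eq_or : ∏ x ∈ c.support, w x = (-1) ^ #c.support ∨
      ∏ x ∈ c.support, w x = -(-1) ^ #c.support :=
    Int.isUnit_eq_or_eq_neg (IsUnit.prod_iff.mpr hw) (isUnit_neg_one.pow _)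
  have sign_eq : (Equiv.Perm.sign c : ℤ) = -(-1) ^ #c.support := by
    simp [hc.sign]
  have sq_eq_one : ((-1 : ℤ) ^ #c.support) * (-1) ^ #c.support = 1 :=
    Int.isUnit_mul_self (isUnit_neg_one.pow _)
  rw [sign_eq]
  split_ifs with h
  · rw [h, neg_mul, sq_eq_one]
  · rw [weight_eq_or.resolve_left h, neg_mul_neg, sq_eq_one]

/-- The oriented strips of a permutation `σ` whose points carry weights `w`: the orbits with at
least two points, each encoded as the cycle of `σ` supported on it, whose total weight is `(-1)` to
their size. For fitting orientations `φ, φ'` one takes `σ = φ⁻¹ ∘ φ'` and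
`w r = ∂[r, φ r] * ∂[r, φ' r]`. -/
def orientedStrips (σ : Equiv.Perm X) (w : X → ℤ) : Finset (Equiv.Perm X) :=
  σ.cycleFactorsFinset.filter fun c => ∏ x ∈ c.support, w x = (-1) ^ #c.support

theorem sign_mul_prod_eq_neg_one_pow_card_orientedStrips {σ : Equiv.Perm X} {w : X → ℤ}
    (hw : ∀ x ∈ σ.support, IsUnit (w x)) (hfix : ∀ x ∉ σ.support, w x = 1) :
    (Equiv.Perm.sign σ : ℤ) * ∏ x, w x = (-1) ^ #(orientedStrips σ w) :=
  calc
    (Equiv.Perm.sign σ : ℤ) * ∏ x, w x = Equiv.Perm.sign σ * ∏ x ∈ σ.support, w x := by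
        rw [prod_subset (subset_univ σ.support) fun x _ => hfix x]
    _ = ∏ c ∈ σ.cycleFactorsFinset, (Equiv.Perm.sign c : ℤ) * ∏ x ∈ c.support, w x := by
        rw [sign_eq_prod_sign_cycleFactorsFinset, prod_support_eq_prod_cycleFactorsFinset,
          prod_mul_distrib, Units.coe_prod]
    _ = ∏ c ∈ σ.cycleFactorsFinset,
          if ∏ x ∈ c.support, w x = (-1) ^ #c.support then -1 else 1 :=
        prod_congr rfl fun c hc =>
          sign_mul_prod_support_of_isCycle (Equiv.Perm.mem_cycleFactorsFinset_iff.mp hc).1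
            fun x hx => hw x (Equiv.Perm.mem_cycleFactorsFinset_support_le hc hx)
    _ = (-1) ^ #(orientedStrips σ w) := by
        rw [← prod_filter, prod_const, orientedStrips]

end CycleWeights

section Orientations

variable {ι X Y : Type*} [Fintype ι] [DecidableEq ι] [Fintype X] [DecidableEq X]

theorem sign_trans_symm_mul_sign_trans_symm (α : ι ≃ X) (β : ι ≃ Y) (φ φ' : X ≃ Y) :
    Equiv.Perm.sign ((α.trans φ).trans β.symm) * Equiv.Perm.sign ((α.trans φ').trans β.symm) =
      Equiv.Perm.sign (φ'.trans φ.symm) := by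
  have conj_eq : ((α.trans φ).trans β.symm)⁻¹ * (α.trans φ').trans β.symm =
      (α.trans (φ'.trans φ.symm)).trans α.symm := by
    ext i
    simp [Equiv.Perm.inv_def]
  rw [← Equiv.Perm.sign_trans_trans_symm (φ'.trans φ.symm) α, ← conj_eq, Equiv.Perm.sign_mul,
    Equiv.Perm.sign_inv]

theorem sign_product_eq_neg_one_pow_orientedStrips_general (A : Matrix X Y ℤ)
    (α : ι ≃ X) (β : ι ≃ Y) (φ φ' : X ≃ Y)
    (hφ : ∀ x, IsUnit (A x (φ x))) (hφ' : ∀ x, IsUnit (A x (φ' x))) :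
    (Equiv.Perm.sign ((α.trans φ).trans β.symm) : ℤ) *
        (Equiv.Perm.sign ((α.trans φ').trans β.symm) : ℤ) * ∏ x, A x (φ x) * A x (φ' x) =
      (-1) ^ #(orientedStrips (φ'.trans φ.symm) fun x => A x (φ x) * A x (φ' x)) := by
  rw [← Units.val_mul, sign_trans_symm_mul_sign_trans_symm]
  refine sign_mul_prod_eq_neg_one_pow_card_orientedStrips
    (fun x _ => (hφ x).mul (hφ' x)) fun x hx => ?_
  have agree : φ' x = φ x := φ.symm_apply_eq.mp (Equiv.Perm.notMem_support.mp hx)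
  rw [agree, Int.isUnit_mul_self (hφ x)]

end Orientations

theorem isUnit_incEntry {n : ℕ} {r f : Finset (Fin n)} (h : r ⊆ f) : IsUnit (incEntry r f) := by
  rw [incEntry, if_pos h]
  exact isUnit_neg_one.pow _

/-- For two fitting orientations `φ, φ'` of a rooted forest `(F,R)`,
`sign(π_{α,β,φ})·sign(π_{α,β,φ'})·Π_{r∈R̄} ∂[r,φ(r)]·∂[r,φ'(r)] = (−1)^s`, where `s` is
the number of oriented strips of `(φ,φ')`, i.e. of orbits `C` of `θ = φ⁻¹∘φ'` with
`|C| ≥ 2` (the cycles of `θ`) such that `Π_{r∈C} ∂[r,φ(r)]·∂[r,φ'(r)] = (−1)^{|C|}`. -/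
theorem sign_product_eq_neg_one_pow_orientedStrips
    (n d : ℕ) (hn : 1 ≤ n) (hd : 1 ≤ d)
    (G : Finset (Finset (Fin n))) (hG : IsComplex n d G)
    (F R : Finset (Finset (Fin n))) (hFR : IsRootedForest n d G F R)
    (α : Fin ((faces G (d - 1) \ R).card) ≃
      (faces G (d - 1) \ R : Finset (Finset (Fin n))))
    (β : Fin ((faces G (d - 1) \ R).card) ≃ F)
    (φ φ' : (faces G (d - 1) \ R : Finset (Finset (Fin n))) ≃ F)
    (hφ : ∀ r, r.1 ⊆ (φ r).1) (hφ' : ∀ r, r.1 ⊆ (φ' r).1) :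
    (Equiv.Perm.sign ((α.trans φ).trans β.symm) : ℤ) *
        (Equiv.Perm.sign ((α.trans φ').trans β.symm) : ℤ) *
        ∏ r : (faces G (d - 1) \ R : Finset (Finset (Fin n))),
          incEntry r.1 (φ r).1 * incEntry r.1 (φ' r).1 =
      (-1 : ℤ) ^
        ((Equiv.Perm.cycleFactorsFinset (φ'.trans φ.symm) |>.filter fun c =>
            (∏ r ∈ c.support, incEntry r.1 (φ r).1 * incEntry r.1 (φ' r).1) =
              (-1 : ℤ) ^ c.support.card).card) := by
  simpa only [orientedStrips] using sign_product_eq_neg_one_pow_orientedStrips_general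
    (fun r f => incEntry r.1 f.1) α β φ φ' (fun r => isUnit_incEntry (hφ r))
    fun r => isUnit_incEntry (hφ' r)
end

section
/- Let 1 ≤ d ≤ n − 1 and let K_n^d be the complete d-dimensional simplicial complex on Fin n, i.e. the family of all subsets of Fin n of cardinality at most d+1, with incidence matrix ∂. Then, as an identity in ℤ[x], Σ over all rooted forests (F,R) of K_n^d of det(∂_{R̄,F})² · x^{|R|} = x^{C(n−1, d−1)} · (x + n)^{C(n−1, d)}, where C(a,b) denotes the binomial coefficient. -/
open Finset

/-- The square submatrix `∂_{R̄,F}` of the incidence matrix, with rows indexed by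
`R̄ = G_{d-1} \ R` and columns indexed by `F` (identified with `R̄` via `e`). -/
def subMat (n d : ℕ) (G F R : Finset (Finset (Fin n)))
    (e : (faces G (d - 1) \ R : Finset (Finset (Fin n))) ≃ F) :
    Matrix (faces G (d - 1) \ R : Finset (Finset (Fin n)))
      (faces G (d - 1) \ R : Finset (Finset (Fin n))) ℤ :=
  Matrix.of fun r r' => incEntry r.1 (e r').1

/-- The complete `d`-dimensional simplicial complex on `Fin n`: all subsets of
cardinality at most `d+1`. -/
def completeComplex (n d : ℕ) : Finset (Finset (Fin n)) :=
  Finset.univ.filter fun f => f.card ≤ d + 1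

/-! Deleting the vertex `v` from a face, with its sign, is an operator `a_v` on the chains of the
full simplex, and these operators satisfy the canonical anticommutation relations. Hence the total
boundary `∂ = ∑ v, a_v` satisfies `∂² = 0` and `∂∂ᵀ + ∂ᵀ∂ = n`. In a fixed dimension,
`M = ∂_{k+1}∂_{k+1}ᵀ` and `N = ∂_kᵀ∂_k` therefore satisfy `M + N = n` and `MN = 0`, so that
`det (x + M) * det (x + N) = (x (x + n)) ^ C(n, k+1)`. Since `∂_kᵀ∂_k` and `∂_k∂_kᵀ` have the same
characteristic polynomial up to a power of `x`, this is a recursion in `k` for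
`det (x + ∂_k∂_kᵀ)`, which Pascal's rule solves.

On the other side, `x + ∂∂ᵀ` is the Schur complement of `1` in `[[x, ∂], [-∂ᵀ, 1]]`. Expanding the
determinant of this block matrix along its diagonal gives the sum of `det(∂_{R̄,F})² * x ^ |R|` over
all `F` and `R`, and `∂_{R̄,F}` is square and nonsingular only if `(F, R)` is a rooted forest. -/

lemma sum_powerset_eq_sum_map_subtype {ι M : Type*} [AddCommMonoid M] (s : Finset ι)
    (g : Finset ι → M) :
    ∑ t ∈ s.powerset, g t = ∑ t : Finset s, g (t.map (.subtype _)) := by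
  classical
  refine sum_bij' (fun t _ => t.subtype (· ∈ s)) (fun t _ => t.map (.subtype _))
    (fun _ _ => mem_univ _) ?_ ?_ ?_ ?_
  · exact fun t _ => mem_powerset.2 (map_subtype_subset t)
  · exact fun t ht => subtype_map_of_mem (mem_powerset.1 ht)
  · exact fun t _ => by ext; simp
  · exact fun t ht => by rw [subtype_map_of_mem (mem_powerset.1 ht)]

section LinearAlgebra

open scoped Matrix Polynomial
open Polynomial (X C)

variable {m p q R : Type*} [CommRing R]

lemma det_add_diagonal [Fintype m] [DecidableEq m] (M : Matrix m m R) (D : m → R) :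
    (M + Matrix.diagonal D).det =
      ∑ s : Finset m, (∏ i ∈ sᶜ, D i) * (M.submatrix (↑) (↑) : Matrix s s R).det := by
  refine (Matrix.detRowAlternating.map_add_univ M.row (Matrix.diagonal D).row).trans ?_
  refine sum_congr rfl fun s _ => ?_
  have hrows : s.piecewise M.row (Matrix.diagonal D).row =
      fun i => (if i ∈ s then 1 else D i) • s.piecewise M.row (1 : Matrix m m R).row i := by
    ext i j
    by_cases hi : i ∈ s <;> simp [hi, Matrix.diagonal_apply, Matrix.one_apply]
  have hprod : ∏ i, (if i ∈ s then 1 else D i) = ∏ i ∈ sᶜ, D i := by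
    simp only [prod_ite, prod_const_one, one_mul, ← compl_filter, filter_univ_mem]
  rw [hrows, Matrix.detRowAlternating.map_smul_univ, hprod, smul_eq_mul,
    ← Matrix.det_piecewise_one_eq_submatrix_det]
  rfl

section DetSq

variable [Fintype p] [DecidableEq p] [Fintype q] [DecidableEq q]

/-- The square of the determinant of a possibly rectangular matrix `A`, encoded without choosing
a bijection between rows and columns as the determinant of the skew block matrix
`[[0, A], [-Aᵀ, 0]]`; it vanishes unless `A` has as many rows as columns. -/
def detSq (A : Matrix p q R) : R := (Matrix.fromBlocks 0 A (-Aᵀ) 0).det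

lemma detSq_submatrix_equiv {p' q' : Type*} [Fintype p'] [DecidableEq p'] [Fintype q']
    [DecidableEq q'] (A : Matrix p q R) (e : p' ≃ p) (f : q' ≃ q) :
    detSq (A.submatrix e f) = detSq A := by
  rw [detSq, detSq, ← Matrix.det_submatrix_equiv_self (e.sumCongr f)]
  congr 1
  ext (i | i) (j | j) <;> rfl

lemma detSq_map {S : Type*} [CommRing S] (f : R →+* S) (A : Matrix p q R) :
    detSq (A.map f) = f (detSq A) := by
  rw [detSq, detSq, f.map_det, RingHom.mapMatrix_apply, Matrix.fromBlocks_map]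
  congr 2 <;> ext <;> simp

lemma detSq_eq_det_sq (A : Matrix p p R) : detSq A = A.det ^ 2 := by
  have hJ : Matrix.fromBlocks 0 A (-Aᵀ) 0 = Matrix.fromBlocks (-A) 0 0 (-Aᵀ) * Matrix.J p R := by
    simp [Matrix.J, Matrix.fromBlocks_multiply]
  rw [detSq, hJ, Matrix.det_mul, SymplecticGroup.det_eq_one (SymplecticGroup.J_mem p R),
    Matrix.det_fromBlocks_zero₂₁, ← Matrix.transpose_neg, Matrix.det_transpose, Matrix.det_neg]
  rw [mul_one, ← sq, mul_pow, ← pow_mul, mul_comm _ 2, pow_mul, neg_one_sq, one_pow, one_mul]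

lemma detSq_eq_zero_of_card_ne (A : Matrix p q R) (h : Fintype.card p ≠ Fintype.card q) :
    detSq A = 0 := by
  -- Scaling the first block of rows or the second block of columns by `X` has the same effect.
  let N : Matrix (p ⊕ q) (p ⊕ q) R[X] := Matrix.fromBlocks 0 (A.map C) (-(A.map C)ᵀ) 0
  have hcomm : Matrix.fromBlocks (Matrix.scalar p X) 0 0 1 * N =
      N * Matrix.fromBlocks 1 0 0 (Matrix.scalar q X) := by
    simp [N, Matrix.fromBlocks_multiply, ← Matrix.smul_eq_diagonal_mul,
      ← Matrix.op_smul_eq_mul_diagonal]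
  have hdet := congrArg Matrix.det hcomm
  have hN : N.det = C (detSq A) := detSq_map C A
  rw [Matrix.det_mul, Matrix.det_mul, Matrix.det_fromBlocks_zero₂₁, Matrix.det_fromBlocks_zero₂₁,
    hN] at hdet
  simp only [Matrix.scalar_apply, Matrix.det_diagonal, prod_const, card_univ, Matrix.det_one,
    mul_one, one_mul] at hdet
  have hcoeff := congrArg (Polynomial.coeff · (Fintype.card p)) hdet
  simpa [Polynomial.coeff_X_pow, Polynomial.coeff_X_pow_mul', h] using hcoeff

lemma exists_equiv_det_ne_zero_of_detSq_ne_zero {A : Matrix p q R} (hA : detSq A ≠ 0) :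
    ∃ e : p ≃ q, (A.submatrix id e).det ≠ 0 := by
  have hcard : Fintype.card p = Fintype.card q := not_imp_comm.1 (detSq_eq_zero_of_card_ne A) hA
  obtain ⟨e⟩ := Fintype.card_eq.1 hcard
  refine ⟨e, fun hdet => hA ?_⟩
  rw [← detSq_submatrix_equiv A (Equiv.refl p) e, Equiv.coe_refl, detSq_eq_det_sq, hdet,
    zero_pow two_ne_zero]

lemma linearIndependent_row_of_detSq_ne_zero [IsDomain R] {A : Matrix p q R} (hA : detSq A ≠ 0) :
    LinearIndependent R A.row := by
  obtain ⟨e, he⟩ := exists_equiv_det_ne_zero_of_detSq_ne_zero hA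
  exact (Matrix.linearIndependent_rows_of_det_ne_zero he).of_comp (LinearMap.funLeft R R e)

lemma linearIndependent_col_of_detSq_ne_zero [IsDomain R] {A : Matrix p q R} (hA : detSq A ≠ 0) :
    LinearIndependent R A.col := by
  obtain ⟨e, he⟩ := exists_equiv_det_ne_zero_of_detSq_ne_zero hA
  exact (linearIndependent_equiv e).1 (Matrix.linearIndependent_cols_of_det_ne_zero he)

lemma det_diagonal_add_mul_transpose (A : Matrix p q R) (D : p → R) :
    (Matrix.diagonal D + A * Aᵀ).det = ∑ F : Finset q, ∑ S : Finset p,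
      (∏ i ∈ Sᶜ, D i) * detSq (A.submatrix (↑) (↑) : Matrix S F R) := by
  have hblocks : Matrix.fromBlocks (Matrix.diagonal D) A (-Aᵀ) 1 =
      Matrix.fromBlocks 0 A (-Aᵀ) 0 + Matrix.diagonal (Sum.elim D fun _ => 1) := by
    rw [← Matrix.fromBlocks_diagonal, Matrix.fromBlocks_add]
    simp
  have hschur : (Matrix.diagonal D + A * Aᵀ).det =
      (Matrix.fromBlocks (Matrix.diagonal D) A (-Aᵀ) 1).det := by
    rw [Matrix.det_fromBlocks_one₂₂, Matrix.mul_neg, sub_neg_eq_add]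
  rw [hschur, hblocks, det_add_diagonal, sum_comm, ← Fintype.sum_prod_type']
  refine (Fintype.sum_equiv sumEquiv.toEquiv.symm _ _ fun ⟨S, F⟩ => ?_).symm
  let e : S ⊕ F ≃ (S.disjSum F : Finset (p ⊕ q)) :=
    ((Equiv.subtypeEquivRight fun i => (inl_mem_disjSum (s := S) (t := F) (a := i)).symm).sumCongr
      (Equiv.subtypeEquivRight fun j => (inr_mem_disjSum (s := S) (t := F) (b := j)).symm)).trans
      (Equiv.subtypeSum (p := (· ∈ S.disjSum F))).symm
  have hcompl : (S.disjSum F)ᶜ = Sᶜ.disjSum Fᶜ := by ext (i | j) <;> simp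
  change _ = (∏ i ∈ (S.disjSum F)ᶜ, Sum.elim D (fun _ => 1) i) * _
  rw [hcompl, prod_disjSum]
  simp only [Sum.elim_inl, Sum.elim_inr, prod_const_one, mul_one]
  congr 1
  rw [detSq]
  refine Eq.trans ?_ (Matrix.det_submatrix_equiv_self e _)
  congr 1
  ext (i | i) (j | j) <;> rfl

lemma charpoly_neg_mul_transpose (A : Matrix p q R) :
    (-(A * Aᵀ)).charpoly = ∑ F : Finset q, ∑ S : Finset p,
      C (detSq (A.submatrix (↑) (↑) : Matrix S F R)) * X ^ #Sᶜ := by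
  have hchar : (-(A * Aᵀ)).charmatrix =
      Matrix.diagonal (fun _ => X) + A.map C * (A.map C)ᵀ := by
    rw [Matrix.charmatrix, map_neg, sub_neg_eq_add, RingHom.mapMatrix_apply, Matrix.map_mul]
    rfl
  rw [Matrix.charpoly, hchar, det_diagonal_add_mul_transpose]
  refine sum_congr rfl fun F _ => sum_congr rfl fun S _ => ?_
  rw [prod_const, mul_comm, ← detSq_map]
  rfl

end DetSq

lemma charpoly_neg_mul_charpoly_neg_of_add_eq_smul_one [Fintype p] [DecidableEq p]
    {M N : Matrix p p R} {c : R} (hadd : M + N = c • 1) (hmul : M * N = 0) :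
    (-M).charpoly * (-N).charpoly = (X * (X + C c)) ^ Fintype.card p := by
  have hprod : (-M).charmatrix * (-N).charmatrix = Matrix.scalar p (X * (X + C c)) := by
    have hadd' : M.map C + N.map C = Matrix.scalar p (C c) := by
      rw [← Matrix.map_add C (map_add C), hadd]
      ext i j
      simp [Matrix.one_apply, Matrix.diagonal_apply, apply_ite C]
    have hmul' : M.map C * N.map C = 0 := by
      rw [← Matrix.map_mul, hmul, Matrix.map_zero C (map_zero C)]
    have hX : M.map C * Matrix.scalar p X = Matrix.scalar p X * M.map C :=
      (Matrix.scalar_commute X (Commute.all X) _).eq.symm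
    simp only [Matrix.charmatrix, map_neg, sub_neg_eq_add, RingHom.mapMatrix_apply, add_mul,
      mul_add, hmul', hX, add_zero, map_mul, map_add, ← hadd']
    abel
  rw [Matrix.charpoly, Matrix.charpoly, ← Matrix.det_mul, hprod]
  simp

lemma submatrix_mul_eq_mul_submatrix {ι κ o S : Type*} [Fintype κ] [NonUnitalNonAssocSemiring S]
    {M : Matrix ι κ S} {N : Matrix κ o S} (P : Finset ι) (Q : Finset κ) (T : Finset o)
    (hM : ∀ i ∈ P, ∀ j ∉ Q, M i j = 0) :
    ((M * N).submatrix (↑) (↑) : Matrix P T S) =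
      (M.submatrix (↑) (↑) : Matrix P Q S) * (N.submatrix (↑) (↑) : Matrix Q T S) := by
  ext i j
  simp only [Matrix.submatrix_apply, Matrix.mul_apply]
  rw [sum_coe_sort Q fun l => M i l * N l j]
  exact (sum_subset (subset_univ Q) fun l _ hl => by rw [hM i i.2 l hl, zero_mul]).symm

end LinearAlgebra

section VertexDeletion

open scoped Matrix

variable {α : Type*} [LinearOrder α]

/-- The sign `(-1) ^ j`, where `j` is the position of `v` in `insert v s`. -/
def deletionSign (v : α) (s : Finset α) : ℤ := (-1) ^ #{w ∈ s | w < v}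

lemma deletionSign_mul_self (v : α) (s : Finset α) : deletionSign v s * deletionSign v s = 1 := by
  rw [deletionSign, ← mul_pow, neg_one_mul, neg_neg, one_pow]

lemma deletionSign_insert {v a : α} {s : Finset α} (ha : a ∉ s) :
    deletionSign v (insert a s) = if a < v then -deletionSign v s else deletionSign v s := by
  rw [deletionSign, filter_insert]
  split_ifs with h
  · rw [card_insert_of_notMem (by simp [ha]), pow_succ, mul_neg_one, deletionSign]
  · rfl

lemma deletionSign_erase {v a : α} {s : Finset α} (ha : a ∈ s) :
    deletionSign v (s.erase a) = if a < v then -deletionSign v s else deletionSign v s := by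
  have h := deletionSign_insert (v := v) (notMem_erase a s)
  rw [insert_erase ha] at h
  grind

/-- The operator deleting the vertex `v` from a face, with the sign of the simplicial boundary;
columns are indexed by the face from which `v` is deleted. -/
def vertexDeletion (v : α) : Matrix (Finset α) (Finset α) ℤ :=
  Matrix.of fun r f => if v ∉ r ∧ insert v r = f then deletionSign v r else 0

lemma vertexDeletion_apply_eq_ite_erase (v : α) (r f : Finset α) :
    vertexDeletion v r f = if v ∈ f ∧ f.erase v = r then deletionSign v f else 0 := by
  rw [vertexDeletion, Matrix.of_apply]
  grind [deletionSign_insert]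

variable [Fintype α]

lemma vertexDeletion_mul_apply (v : α) (M : Matrix (Finset α) (Finset α) ℤ) (r f : Finset α) :
    (vertexDeletion v * M) r f = if v ∈ r then 0 else deletionSign v r * M (insert v r) f := by
  by_cases hv : v ∈ r <;> simp [Matrix.mul_apply, vertexDeletion, hv]

lemma transpose_vertexDeletion_mul_apply (v : α) (M : Matrix (Finset α) (Finset α) ℤ)
    (r f : Finset α) :
    ((vertexDeletion v)ᵀ * M) r f =
      if v ∈ r then deletionSign v r * M (r.erase v) f else 0 := by
  simp only [Matrix.mul_apply, Matrix.transpose_apply, vertexDeletion_apply_eq_ite_erase]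
  by_cases hv : v ∈ r <;> simp [hv]

lemma vertexDeletion_mul_add_mul (v w : α) :
    vertexDeletion v * vertexDeletion w + vertexDeletion w * vertexDeletion v = 0 := by
  ext r f
  rw [Matrix.add_apply, vertexDeletion_mul_apply, vertexDeletion_mul_apply]
  simp only [vertexDeletion, Matrix.of_apply, Matrix.zero_apply, insert_comm w v]
  rcases lt_trichotomy v w with h | rfl | h <;> grind [deletionSign_insert]

lemma vertexDeletion_mul_transpose_self_add (v : α) :
    vertexDeletion v * (vertexDeletion v)ᵀ + (vertexDeletion v)ᵀ * vertexDeletion v = 1 := by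
  ext r f
  rw [Matrix.add_apply, vertexDeletion_mul_apply, transpose_vertexDeletion_mul_apply,
    Matrix.transpose_apply, vertexDeletion_apply_eq_ite_erase, Matrix.one_apply]
  by_cases hr : v ∈ r
  · simp [hr, vertexDeletion, insert_erase hr, deletionSign_erase, deletionSign_mul_self]
  · simp [hr, deletionSign_insert hr, deletionSign_mul_self]

lemma vertexDeletion_mul_transpose_add_of_ne {v w : α} (hvw : v ≠ w) :
    vertexDeletion v * (vertexDeletion w)ᵀ + (vertexDeletion w)ᵀ * vertexDeletion v = 0 := by
  ext r f
  rw [Matrix.add_apply, vertexDeletion_mul_apply, transpose_vertexDeletion_mul_apply,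
    Matrix.transpose_apply, vertexDeletion_apply_eq_ite_erase, vertexDeletion, Matrix.of_apply,
    erase_insert_of_ne hvw]
  simp only [mem_insert, mem_erase, hvw.symm, Matrix.zero_apply]
  rcases hvw.lt_or_gt with h | h <;> grind [deletionSign_insert, deletionSign_erase]

end VertexDeletion

section Boundary

open scoped Matrix Polynomial
open Polynomial (X C)

variable (α : Type*) [LinearOrder α] [Fintype α]

/-- The boundary operator of the full simplex on `α`, on faces of all dimensions at once,
the empty face included. -/
def boundary : Matrix (Finset α) (Finset α) ℤ := ∑ v, vertexDeletion v

lemma boundary_mul_boundary : boundary α * boundary α = 0 := by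
  have hdouble : boundary α * boundary α + boundary α * boundary α = 0 := by
    rw [boundary, sum_mul_sum]
    nth_rw 2 [sum_comm]
    simp only [← sum_add_distrib, vertexDeletion_mul_add_mul, sum_const_zero]
  ext r f
  exact add_self_eq_zero.mp (congrFun₂ hdouble r f)

lemma boundary_mul_transpose_add :
    boundary α * (boundary α)ᵀ + (boundary α)ᵀ * boundary α = (Fintype.card α : ℤ) • 1 := by
  have hanti (v w : α) : vertexDeletion v * (vertexDeletion w)ᵀ +
      (vertexDeletion w)ᵀ * vertexDeletion v = if v = w then 1 else 0 := by
    split_ifs with hvw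
    · rw [hvw, vertexDeletion_mul_transpose_self_add]
    · exact vertexDeletion_mul_transpose_add_of_ne hvw
  rw [boundary, Matrix.transpose_sum, sum_mul_sum, sum_mul_sum]
  nth_rw 2 [sum_comm]
  simp only [← sum_add_distrib, hanti, sum_ite_eq, mem_univ, if_true, sum_const, card_univ,
    natCast_zsmul]

variable {α}

lemma boundary_apply_eq_zero_of_card_ne {r f : Finset α} (h : #f ≠ #r + 1) :
    boundary α r f = 0 := by
  rw [boundary, Matrix.sum_apply]
  refine sum_eq_zero fun v _ => if_neg ?_
  rintro ⟨hv, rfl⟩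
  exact h (card_insert_of_notMem hv)

variable (α)

/-- The boundary matrix of the full simplex on `α` from faces of cardinality `k + 1` to faces of
cardinality `k`. -/
def boundaryMatrix (k : ℕ) :
    Matrix (powersetCard k (univ : Finset α)) (powersetCard (k + 1) (univ : Finset α)) ℤ :=
  (boundary α).submatrix (↑) (↑)

lemma boundaryMatrix_mul_succ (k : ℕ) : boundaryMatrix α k * boundaryMatrix α (k + 1) = 0 := by
  rw [boundaryMatrix, boundaryMatrix, ← submatrix_mul_eq_mul_submatrix, boundary_mul_boundary]
  · rfl
  · intro r hr f hf
    rw [mem_powersetCard_univ] at hr hf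
    exact boundary_apply_eq_zero_of_card_ne (by omega)

lemma submatrix_boundary_mul_transpose (k : ℕ) :
    (boundary α * (boundary α)ᵀ).submatrix (↑) (↑) =
      boundaryMatrix α k * (boundaryMatrix α k)ᵀ := by
  refine submatrix_mul_eq_mul_submatrix _ _ _ fun r hr f hf => boundary_apply_eq_zero_of_card_ne ?_
  rw [mem_powersetCard_univ] at hr hf
  omega

lemma submatrix_transpose_boundary_mul (k : ℕ) :
    ((boundary α)ᵀ * boundary α).submatrix (↑) (↑) =
      (boundaryMatrix α k)ᵀ * boundaryMatrix α k := by
  refine submatrix_mul_eq_mul_submatrix _ _ _ fun f hf r hr => boundary_apply_eq_zero_of_card_ne ?_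
  rw [mem_powersetCard_univ] at hr hf
  omega

lemma boundaryMatrix_succ_mul_transpose_add (k : ℕ) :
    boundaryMatrix α (k + 1) * (boundaryMatrix α (k + 1))ᵀ +
      (boundaryMatrix α k)ᵀ * boundaryMatrix α k = (Fintype.card α : ℤ) • 1 := by
  rw [← submatrix_boundary_mul_transpose, ← submatrix_transpose_boundary_mul,
    ← Matrix.submatrix_one _ Subtype.val_injective]
  exact congrArg (Matrix.submatrix · _ _) (boundary_mul_transpose_add α)

lemma boundaryMatrix_zero_mul_transpose :
    boundaryMatrix α 0 * (boundaryMatrix α 0)ᵀ = (Fintype.card α : ℤ) • 1 := by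
  rw [← submatrix_boundary_mul_transpose, eq_sub_of_add_eq (boundary_mul_transpose_add α)]
  ext r r'
  have hr : #(r : Finset α) = 0 := mem_powersetCard_univ.1 r.2
  have hzero : ((boundary α)ᵀ * boundary α) r r' = 0 :=
    sum_eq_zero fun f _ => mul_eq_zero_of_left (boundary_apply_eq_zero_of_card_ne (by omega)) _
  rw [Matrix.submatrix_apply, Matrix.sub_apply, hzero, sub_zero, Matrix.smul_apply,
    Matrix.smul_apply, Matrix.one_apply, Matrix.one_apply]
  simp only [Subtype.val_inj]

lemma charpoly_neg_boundaryMatrix_zero :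
    (-(boundaryMatrix α 0 * (boundaryMatrix α 0)ᵀ)).charpoly = X + C (Fintype.card α : ℤ) := by
  have hcard : Fintype.card (powersetCard 0 (univ : Finset α)) = 1 := by simp
  rw [boundaryMatrix_zero_mul_transpose, Matrix.charpoly,
    Matrix.det_eq_elem_of_card_eq_one hcard ⟨∅, by simp⟩, Matrix.charmatrix_apply_eq,
    Matrix.neg_apply, Matrix.smul_apply, Matrix.one_apply_eq]
  simp

lemma charpoly_neg_boundaryMatrix_mul_succ (k : ℕ) :
    (-(boundaryMatrix α (k + 1) * (boundaryMatrix α (k + 1))ᵀ)).charpoly *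
        (-(boundaryMatrix α k * (boundaryMatrix α k)ᵀ)).charpoly =
      X ^ (Fintype.card α).choose k *
        (X + C (Fintype.card α : ℤ)) ^ (Fintype.card α).choose (k + 1) := by
  have horth : boundaryMatrix α (k + 1) * (boundaryMatrix α (k + 1))ᵀ *
      ((boundaryMatrix α k)ᵀ * boundaryMatrix α k) = 0 := by
    rw [Matrix.mul_assoc, ← Matrix.mul_assoc _ᵀ, ← Matrix.transpose_mul, boundaryMatrix_mul_succ,
      Matrix.transpose_zero, Matrix.zero_mul, Matrix.mul_zero]
  have hprod := charpoly_neg_mul_charpoly_neg_of_add_eq_smul_one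
    (boundaryMatrix_succ_mul_transpose_add α k) horth
  have hswap := Matrix.charpoly_mul_comm' (boundaryMatrix α k) (-(boundaryMatrix α k)ᵀ)
  simp only [Fintype.card_coe, card_powersetCard, card_univ, Matrix.mul_neg, Matrix.neg_mul]
    at hprod hswap
  refine mul_left_cancel₀ (pow_ne_zero ((Fintype.card α).choose (k + 1)) Polynomial.X_ne_zero) ?_
  rw [mul_left_comm, hswap, mul_left_comm, hprod, mul_pow, mul_left_comm]

variable {α} in
lemma charpoly_neg_boundaryMatrix_succ {m : ℕ} (hm : Fintype.card α = m + 1) (k : ℕ) :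
    (-(boundaryMatrix α (k + 1) * (boundaryMatrix α (k + 1))ᵀ)).charpoly =
      X ^ m.choose k * (X + C (Fintype.card α : ℤ)) ^ m.choose (k + 1) := by
  have hX : (X : ℤ[X]) ≠ 0 := Polynomial.X_ne_zero
  have hXn : X + C (Fintype.card α : ℤ) ≠ 0 := Polynomial.X_add_C_ne_zero _
  have hrec := charpoly_neg_boundaryMatrix_mul_succ α
  induction k with
  | zero =>
    refine mul_right_cancel₀ hXn ?_
    rw [← charpoly_neg_boundaryMatrix_zero, hrec]
    simp [hm, charpoly_neg_boundaryMatrix_zero, pow_succ, mul_assoc]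
  | succ k ih =>
    refine mul_right_cancel₀ (mul_ne_zero (pow_ne_zero (m.choose k) hX)
      (pow_ne_zero (m.choose (k + 1)) hXn)) ?_
    rw [← ih, hrec, ih]
    simp only [hm, Nat.choose_succ_succ', pow_add]
    ring

end Boundary

section RootedForests

open scoped Matrix
open Polynomial (X C)

variable {n d : ℕ} {G F R : Finset (Finset (Fin n))}

/-- The incidence matrix with rows indexed by `P` and columns indexed by `Q`. -/
def incidenceMatrix (P Q : Finset (Finset (Fin n))) : Matrix P Q ℤ :=
  Matrix.of fun r f => incEntry r.1 f.1

lemma isRootedForest_of_detSq_ne_zero (hF : F ⊆ faces G d) (hR : R ⊆ faces G (d - 1))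
    (h : detSq (incidenceMatrix (faces G (d - 1) \ R) F) ≠ 0) : IsRootedForest n d G F R := by
  let A := (incidenceMatrix (faces G (d - 1) \ R) F).map (Int.castRingHom ℚ)
  have hA : detSq A ≠ 0 := by
    rw [detSq_map]
    exact Int.cast_ne_zero.2 h
  have hrow : LinearIndependent ℚ A.row := linearIndependent_row_of_detSq_ne_zero hA
  have hspan : Submodule.span ℚ (Set.range A.row) = ⊤ := by
    obtain ⟨e, -⟩ := exists_equiv_det_ne_zero_of_detSq_ne_zero hA
    refine hrow.span_eq_top_of_card_eq_finrank' ?_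
    rw [Module.finrank_fintype_fun_eq_card, Fintype.card_congr e]
  refine ⟨⟨hF, ?_⟩, hR, hrow, ?_⟩
  · let restrictRows := LinearMap.funLeft ℚ ℚ (Set.inclusion
      (sdiff_subset : faces G (d - 1) \ R ⊆ faces G (d - 1)))
    exact (linearIndependent_col_of_detSq_ne_zero hA).of_comp restrictRows
  · refine hspan.trans (top_unique (hspan.symm.trans_le (Submodule.span_mono ?_))).symm
    rintro _ ⟨r, rfl⟩
    exact ⟨⟨r, sdiff_subset r.2⟩, rfl⟩

lemma det_subMat_sq (e : (faces G (d - 1) \ R : Finset (Finset (Fin n))) ≃ F) :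
    (subMat n d G F R e).det ^ 2 = detSq (incidenceMatrix (faces G (d - 1) \ R) F) := by
  rw [← detSq_eq_det_sq, ← detSq_submatrix_equiv _ (Equiv.refl _) e]
  rfl

lemma detSq_incidenceMatrix_map_subtype {P Q : Finset (Finset (Fin n))} (S : Finset P)
    (T : Finset Q) :
    detSq (incidenceMatrix (P \ Sᶜ.map (.subtype _)) (T.map (.subtype _))) =
      detSq ((incidenceMatrix P Q).submatrix (↑) (↑) : Matrix S T ℤ) := by
  have hsdiff : P \ Sᶜ.map (.subtype _) = S.map (.subtype _) := by
    ext r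
    by_cases hr : r ∈ P <;> simp [hr]
  rw [hsdiff, ← detSq_submatrix_equiv _ (equivMap (.subtype _) S) (equivMap (.subtype _) T)]
  rfl

open scoped Classical in
lemma sum_rootedForests_eq_charpoly
    (e : ∀ F R : Finset (Finset (Fin n)), IsRootedForest n d G F R →
      ((faces G (d - 1) \ R : Finset (Finset (Fin n))) ≃ F)) :
    (∑ F ∈ (faces G d).powerset, ∑ R ∈ (faces G (d - 1)).powerset,
        if h : IsRootedForest n d G F R then
          C ((subMat n d G F R (e F R h)).det ^ 2) * X ^ #R
        else 0) =
      (-(incidenceMatrix (faces G (d - 1)) (faces G d) *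
        (incidenceMatrix (faces G (d - 1)) (faces G d))ᵀ)).charpoly := by
  have hterm : ∀ F ∈ (faces G d).powerset, ∀ R ∈ (faces G (d - 1)).powerset,
      (if h : IsRootedForest n d G F R then C ((subMat n d G F R (e F R h)).det ^ 2) * X ^ #R
        else 0) = C (detSq (incidenceMatrix (faces G (d - 1) \ R) F)) * X ^ #R := by
    intro F hF R hR
    split_ifs with h
    · rw [det_subMat_sq]
    · have hzero : detSq (incidenceMatrix (faces G (d - 1) \ R) F) = 0 := not_imp_comm.1
        (isRootedForest_of_detSq_ne_zero (mem_powerset.1 hF) (mem_powerset.1 hR)) h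
      rw [hzero, map_zero, zero_mul]
  rw [sum_congr rfl fun F hF => sum_congr rfl (hterm F hF), charpoly_neg_mul_transpose,
    sum_powerset_eq_sum_map_subtype]
  refine sum_congr rfl fun F _ => ?_
  rw [sum_powerset_eq_sum_map_subtype, ← compl_bijective.sum_comp]
  simp only [detSq_incidenceMatrix_map_subtype, card_map]

lemma boundary_eq_incEntry {r f : Finset (Fin n)} (h : #f = #r + 1) :
    boundary (Fin n) r f = incEntry r f := by
  rw [boundary, Matrix.sum_apply]
  by_cases hrf : r ⊆ f
  · obtain ⟨v, hv, rfl⟩ := exists_eq_insert_iff.2 ⟨hrf, h.symm⟩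
    have hvertex (w : Fin n) : w ∉ r ∧ insert w r = insert v r ↔ w = v :=
      ⟨fun hw => (insert_inj hw.1).1 hw.2, by rintro rfl; exact ⟨hv, rfl⟩⟩
    have hfilter : {w ∈ insert v r | w < v} = {w ∈ r | w < v} := by simp [filter_insert]
    simp only [vertexDeletion, Matrix.of_apply, hvertex, sum_ite_eq', mem_univ, if_true]
    rw [incEntry, if_pos hrf, insert_sdiff_cancel hv, sum_singleton, hfilter, deletionSign]
  · rw [incEntry, if_neg hrf]
    refine sum_eq_zero fun v _ => if_neg ?_
    rintro ⟨-, rfl⟩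
    exact hrf (subset_insert v r)

lemma incidenceMatrix_powersetCard (k : ℕ) :
    incidenceMatrix (powersetCard k (univ : Finset (Fin n))) (powersetCard (k + 1) univ) =
      boundaryMatrix (Fin n) k := by
  ext r f
  refine (boundary_eq_incEntry ?_).symm
  rw [mem_powersetCard_univ.1 r.2, mem_powersetCard_univ.1 f.2]

lemma faces_completeComplex {k : ℕ} (hk : k ≤ d) :
    faces (completeComplex n d) k = powersetCard (k + 1) univ := by
  ext f
  simp only [faces, completeComplex, mem_filter, mem_univ, true_and, mem_powersetCard_univ]
  omega

end RootedForests

open scoped Classical in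
/-- For `1 ≤ d ≤ n − 1`, the generating function of rooted forests
of the complete complex `K_n^d` is
`Σ_{(F,R)} det(∂_{R̄,F})² x^{|R|} = x^{C(n−1,d−1)} (x+n)^{C(n−1,d)}` in `ℤ[x]`. -/
theorem sum_rootedForests_completeComplex
    (n d : ℕ) (hd : 1 ≤ d) (hdn : d ≤ n - 1)
    (e : ∀ F R : Finset (Finset (Fin n)),
      IsRootedForest n d (completeComplex n d) F R →
        ((faces (completeComplex n d) (d - 1) \ R : Finset (Finset (Fin n))) ≃ F)) :
    (∑ F ∈ (faces (completeComplex n d) d).powerset,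
        ∑ R ∈ (faces (completeComplex n d) (d - 1)).powerset,
        if h : IsRootedForest n d (completeComplex n d) F R then
          (Polynomial.C ((Matrix.det (subMat n d (completeComplex n d) F R (e F R h))) ^ 2)) *
            Polynomial.X ^ R.card
        else 0) =
      Polynomial.X ^ Nat.choose (n - 1) (d - 1) *
        (Polynomial.X + Polynomial.C (n : ℤ)) ^ Nat.choose (n - 1) d := by
  obtain ⟨k, rfl⟩ := Nat.exists_eq_add_of_le' hd
  obtain ⟨m, rfl⟩ : ∃ m, n = m + 1 := Nat.exists_eq_succ_of_ne_zero (by omega)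
  rw [sum_rootedForests_eq_charpoly, faces_completeComplex le_rfl,
    faces_completeComplex (Nat.sub_le _ _), Nat.add_sub_cancel, Nat.add_sub_cancel,
    incidenceMatrix_powersetCard, charpoly_neg_boundaryMatrix_succ (Fintype.card_fin _),
    Fintype.card_fin]
end
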